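/- Let n ≥ 4 and let φ₀ : ℝⁿ₊ → ℝ be defined by φ₀(x) = (α_n/ω_{n−1})·Σ_{i=1}^{n−1} k_i ∫_{ℝ^{n−1}} (y_i²/(1+|y'|²)^{n/2})·|x−(y',0)|^{−(n−2)} dy', where k_i are real constants, α_n = (n(n−2))^{(n−2)/4}, and ω_{n−1} is the surface measure of the unit sphere in ℝⁿ. Then there is a constant C > 0 such that |φ₀(x)| ≤ C/(1+|x|)^{n−3} for all x ∈ ℝⁿ₊. -/

import Mathlib

open MeasureTheory

section RadialKernel

variable {E : Type*} [NormedAddCommGroup E] [NormedSpace ℝ E]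

lemma inv_norm_pow_mul_add_norm_pow_eq {R : ℝ} (hR : 0 < R) (a : ℕ) (y : E) :
    (‖y‖ ^ a * (R + ‖y‖) ^ a)⁻¹ =
      (R ^ (2 * a))⁻¹ * (‖R⁻¹ • y‖ ^ a * (1 + ‖R⁻¹ • y‖) ^ a)⁻¹ := by
  rw [norm_smul, norm_inv, Real.norm_of_nonneg hR.le, ← mul_inv, two_mul, pow_add,
    mul_mul_mul_comm, ← mul_pow R, ← mul_pow R, mul_add R, mul_one,
    mul_inv_cancel_left₀ hR.ne']

variable [FiniteDimensional ℝ E] [MeasurableSpace E] [BorelSpace E]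
  (μ : Measure E) [μ.IsAddHaarMeasure]

/-- A radial kernel with singularity `‖y‖ ^ (-a)` at the origin and decay `‖y‖ ^ (-2 * a)` at
infinity is integrable in dimension `a + 1` when `2 ≤ a`. -/
lemma integrable_inv_norm_pow_mul_one_add_norm_pow {a : ℕ} (ha : 2 ≤ a)
    (hE : Module.finrank ℝ E = a + 1) :
    Integrable (fun y : E => (‖y‖ ^ a * (1 + ‖y‖) ^ a)⁻¹) μ := by
  have : Nontrivial E := Module.nontrivial_of_finrank_pos (R := ℝ) (by omega)
  rw [integrable_fun_norm_addHaar μ (f := fun r : ℝ => (r ^ a * (1 + r) ^ a)⁻¹), hE]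
  have ha' : -(a : ℝ) < -1 := by
    have : (2 : ℝ) ≤ a := by exact_mod_cast ha
    linarith
  refine (integrableOn_add_rpow_Ioi_of_lt (m := 1) ha' (c := 0) (by norm_num)).congr_fun
    (fun r (hr : 0 < r) => ?_) measurableSet_Ioi
  have h1 : 0 < r + 1 := by linarith
  simp only [Real.rpow_neg h1.le, Real.rpow_natCast, Nat.add_sub_cancel, smul_eq_mul]
  rw [add_comm 1 r]
  field_simp

lemma integrable_inv_norm_pow_mul_add_norm_pow {a : ℕ} (ha : 2 ≤ a)
    (hE : Module.finrank ℝ E = a + 1) {R : ℝ} (hR : 0 < R) :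
    Integrable (fun y : E => (‖y‖ ^ a * (R + ‖y‖) ^ a)⁻¹) μ := by
  simp_rw [inv_norm_pow_mul_add_norm_pow_eq hR]
  exact ((integrable_inv_norm_pow_mul_one_add_norm_pow μ ha hE).comp_smul
    (inv_ne_zero hR.ne')).const_mul _

lemma integral_inv_norm_pow_mul_add_norm_pow {a : ℕ} (ha : 1 ≤ a)
    (hE : Module.finrank ℝ E = a + 1) {R : ℝ} (hR : 0 < R) :
    ∫ y : E, (‖y‖ ^ a * (R + ‖y‖) ^ a)⁻¹ ∂μ =
      (R ^ (a - 1))⁻¹ * ∫ y : E, (‖y‖ ^ a * (1 + ‖y‖) ^ a)⁻¹ ∂μ := by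
  simp_rw [inv_norm_pow_mul_add_norm_pow_eq hR]
  rw [integral_const_mul, Measure.integral_comp_inv_smul_of_nonneg μ
    (fun y : E => (‖y‖ ^ a * (1 + ‖y‖) ^ a)⁻¹) hR.le, hE, smul_eq_mul, ← mul_assoc]
  congr 1
  obtain ⟨b, rfl⟩ := Nat.exists_eq_add_of_le' ha
  simp only [Nat.add_sub_cancel]
  field_simp
  ring

/-- If `R ≤ A + B`, then the larger of `A` and `B` is comparable to `R` plus the smaller one. -/
lemma inv_pow_mul_pow_le {A B R s t : ℝ} (a : ℕ) (hR : 0 < R) (hs : 0 < s) (ht : 0 < t)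
    (hsA : s ≤ A) (htB : t ≤ B) (hAB : R ≤ A + B) :
    (A ^ a * B ^ a)⁻¹ ≤ 3 ^ a * ((s ^ a * (R + s) ^ a)⁻¹ + (t ^ a * (R + t) ^ a)⁻¹) := by
  have aux : ∀ {u P Q : ℝ}, 0 < u → u ≤ P → R + u ≤ 3 * Q →
      (P ^ a * Q ^ a)⁻¹ ≤ 3 ^ a * (u ^ a * (R + u) ^ a)⁻¹ := by
    intro u P Q hu hP hQ
    have hQ0 : 0 < Q := by linarith
    rw [← mul_pow, ← mul_pow, ← inv_pow, ← inv_pow, ← mul_pow]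
    have hP0 : 0 < P := hu.trans_le hP
    gcongr
    rw [← div_eq_mul_inv, inv_eq_one_div, div_le_div_iff₀ (by positivity) (by positivity)]
    nlinarith [mul_le_mul hP hQ (by positivity) hP0.le]
  rw [mul_add]
  rcases le_total A B with h | h
  · exact (aux hs hsA (by linarith)).trans (le_add_of_nonneg_right (by positivity))
  · rw [mul_comm (A ^ a)]
    exact (aux ht htB (by linarith)).trans (le_add_of_nonneg_left (by positivity))

lemma integral_le_of_le_inv_one_add_norm_pow_mul_pow {a : ℕ} (ha : 2 ≤ a)
    (hE : Module.finrank ℝ E = a + 1) {R c : ℝ} (hR : 0 < R) (hc : 0 ≤ c) (z : E) {g B : E → ℝ}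
    (hg0 : ∀ y, 0 ≤ g y) (hg : ∀ y, g y ≤ c * ((1 + ‖y‖) ^ a * B y ^ a)⁻¹)
    (hB : ∀ y, ‖y - z‖ ≤ B y) (hRB : ∀ y, R ≤ 1 + ‖y‖ + B y) :
    ∫ y, g y ∂μ ≤
      c * (3 ^ a * (2 * ∫ y : E, (‖y‖ ^ a * (1 + ‖y‖) ^ a)⁻¹ ∂μ)) / R ^ (a - 1) := by
  have : Nontrivial E := Module.nontrivial_of_finrank_pos (R := ℝ) (by omega)
  have hint := integrable_inv_norm_pow_mul_add_norm_pow μ ha hE hR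
  have hint' := hint.comp_sub_right z
  calc ∫ y, g y ∂μ
      ≤ ∫ y, c * (3 ^ a * ((‖y‖ ^ a * (R + ‖y‖) ^ a)⁻¹ +
          (‖y - z‖ ^ a * (R + ‖y - z‖) ^ a)⁻¹)) ∂μ := by
        refine integral_mono_of_nonneg (.of_forall hg0)
          (((hint.add hint').const_mul _).const_mul _) ?_
        filter_upwards [Measure.ae_ne μ 0, Measure.ae_ne μ z] with y hy0 hyz
        exact (hg y).trans (mul_le_mul_of_nonneg_left
          (inv_pow_mul_pow_le a hR (norm_pos_iff.2 hy0) (norm_pos_iff.2 (sub_ne_zero.2 hyz))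
            (by linarith) (hB y) (hRB y)) hc)
    _ = _ := by
        rw [integral_const_mul, integral_const_mul, integral_add hint hint',
          integral_sub_right_eq_self (fun y : E => (‖y‖ ^ a * (R + ‖y‖) ^ a)⁻¹) z,
          integral_inv_norm_pow_mul_add_norm_pow μ (by omega) hE hR]
        ring

end RadialKernel

lemma sq_div_one_add_sq_rpow_le {a : ℕ} {s t : ℝ} (hs : |s| ≤ t) :
    s ^ 2 / (1 + t ^ 2) ^ (((a + 2 : ℕ) : ℝ) / 2) ≤ 2 ^ a * ((1 + t) ^ a)⁻¹ := by
  have ht : 0 ≤ t := (abs_nonneg s).trans hs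
  have hst : s ^ 2 ≤ t ^ 2 := sq_le_sq' (neg_le_of_abs_le hs) (le_of_abs_le hs)
  set w := √(1 + t ^ 2)
  have hw2 : w ^ 2 = 1 + t ^ 2 := Real.sq_sqrt (by positivity)
  have hw0 : 0 < w := Real.sqrt_pos.2 (by positivity)
  have hwt : 1 + t ≤ 2 * w := by nlinarith [sq_nonneg (t - 1)]
  rw [← hw2, ← Real.rpow_natCast w 2, ← Real.rpow_mul hw0.le, Nat.cast_ofNat,
    mul_div_cancel₀ _ (two_ne_zero' ℝ), Real.rpow_natCast, ← inv_pow, ← mul_pow]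
  calc s ^ 2 / w ^ (a + 2) ≤ w ^ 2 / w ^ (a + 2) := by
        rw [hw2]
        exact div_le_div_of_nonneg_right (by linarith) (by positivity)
    _ = w⁻¹ ^ a := by
      rw [inv_pow]
      field_simp
      ring
    _ ≤ _ := by
      gcongr
      rw [← div_eq_mul_inv, inv_eq_one_div, div_le_div_iff₀ hw0 (by positivity)]
      linarith

/-- The inclusion of `ℝᵐ` in `ℝⁿ` as the vectors whose remaining coordinates vanish. -/
def euclideanExtend (m n : ℕ) (y : EuclideanSpace ℝ (Fin m)) : EuclideanSpace ℝ (Fin n) :=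
  (WithLp.equiv 2 _).symm fun j : Fin n => if h : (j : ℕ) < m then y ⟨j, h⟩ else 0

lemma norm_sub_le_norm_sub_euclideanExtend {m n : ℕ} (hmn : m ≤ n)
    (x : EuclideanSpace ℝ (Fin n)) (y : EuclideanSpace ℝ (Fin m)) :
    ‖y - WithLp.toLp 2 fun i => x (Fin.castLE hmn i)‖ ≤ ‖x - euclideanExtend m n y‖ := by
  rw [norm_sub_rev, EuclideanSpace.norm_eq, EuclideanSpace.norm_eq]
  refine Real.sqrt_le_sqrt ?_
  calc _ = ∑ i : Fin m, ‖(x - euclideanExtend m n y) (Fin.castLE hmn i)‖ ^ 2 := by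
        simp [euclideanExtend]
    _ = ∑ j ∈ Finset.univ.map (Fin.castLEEmb hmn), ‖(x - euclideanExtend m n y) j‖ ^ 2 := by
        simp
    _ ≤ _ := Finset.sum_le_sum_of_subset_of_nonneg (Finset.subset_univ _)
        fun _ _ _ => by positivity

lemma norm_euclideanExtend_le {m n : ℕ} (hmn : m ≤ n) (y : EuclideanSpace ℝ (Fin m)) :
    ‖euclideanExtend m n y‖ ≤ ‖y‖ := by
  rw [EuclideanSpace.norm_eq, EuclideanSpace.norm_eq]
  refine Real.sqrt_le_sqrt (le_of_eq ?_)
  calc ∑ j, ‖euclideanExtend m n y j‖ ^ 2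
      = ∑ j ∈ Finset.univ.map (Fin.castLEEmb hmn), ‖euclideanExtend m n y j‖ ^ 2 := by
        refine (Finset.sum_subset (Finset.subset_univ _) fun j _ hj => ?_).symm
        have hj' : ¬ (j : ℕ) < m := fun h => hj (by
          simp only [Finset.mem_map, Finset.mem_univ, true_and]
          exact ⟨⟨j, h⟩, by ext; simp⟩)
        simp [euclideanExtend, hj']
    _ = _ := by simp [euclideanExtend]

theorem phi0_decay (n : ℕ) (hn : 4 ≤ n) (k : Fin (n - 1) → ℝ) :
    let αn : ℝ := ((n : ℝ) * ((n : ℝ) - 2)) ^ (((n : ℝ) - 2) / 4)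
    -- ω is the surface measure of the unit sphere `S^{n-1} ⊂ ℝⁿ`,
    -- i.e. `n` times the volume of the unit ball in `ℝⁿ`.
    let ω : ℝ := (n : ℝ) *
      (volume (Metric.ball (0 : EuclideanSpace ℝ (Fin n)) 1)).toReal
    -- `ext y = (y', 0)` is the embedding of `ℝ^{n-1}` as the boundary of `ℝⁿ₊`.
    let ext : EuclideanSpace ℝ (Fin (n - 1)) → EuclideanSpace ℝ (Fin n) := fun y =>
      (WithLp.equiv 2 _).symm (fun j : Fin n =>
        if h : (j : ℕ) < n - 1 then y ⟨j, h⟩ else 0)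
    let φ₀ : EuclideanSpace ℝ (Fin n) → ℝ := fun x =>
      (αn / ω) * ∑ i : Fin (n - 1), k i *
        ∫ y : EuclideanSpace ℝ (Fin (n - 1)),
          (y i) ^ 2 / (1 + ‖y‖ ^ 2) ^ ((n : ℝ) / 2) *
            (1 / ‖x - ext y‖ ^ ((n : ℝ) - 2))
    ∃ C : ℝ, 0 < C ∧ ∀ x : EuclideanSpace ℝ (Fin n), 0 < x ⟨n - 1, by omega⟩ →
      |φ₀ x| ≤ C / (1 + ‖x‖) ^ ((n : ℝ) - 3) := by
  intro αn ω ext φ₀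
  have hext : ∀ y, ext y = euclideanExtend (n - 1) n y := fun _ => rfl
  obtain ⟨a, ha, hna⟩ : ∃ a : ℕ, 2 ≤ a ∧ n = a + 2 := ⟨n - 2, by omega, by omega⟩
  have hn2 : (n : ℝ) - 2 = (a : ℕ) := by rw [hna]; push_cast; ring
  have hn3 : (n : ℝ) - 3 = ((a - 1 : ℕ) : ℝ) := by
    rw [hna, Nat.cast_sub (by omega)]; push_cast; ring
  have hE : Module.finrank ℝ (EuclideanSpace ℝ (Fin (n - 1))) = a + 1 := by
    rw [finrank_euclideanSpace_fin]; omega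
  set M : ℝ := 2 ^ a * (3 ^ a * (2 *
    ∫ y : EuclideanSpace ℝ (Fin (n - 1)), (‖y‖ ^ a * (1 + ‖y‖) ^ a)⁻¹))
  have hM0 : 0 ≤ M := by positivity
  refine ⟨|αn / ω| * ∑ i, |k i| * M + 1, by positivity, fun x _ => ?_⟩
  have hnonneg : ∀ (i : Fin (n - 1)) (y : EuclideanSpace ℝ (Fin (n - 1))),
      0 ≤ (y i) ^ 2 / (1 + ‖y‖ ^ 2) ^ ((n : ℝ) / 2) * (1 / ‖x - ext y‖ ^ ((n : ℝ) - 2)) :=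
    fun i y => by positivity
  have hbound : ∀ i, ∫ y : EuclideanSpace ℝ (Fin (n - 1)),
      (y i) ^ 2 / (1 + ‖y‖ ^ 2) ^ ((n : ℝ) / 2) * (1 / ‖x - ext y‖ ^ ((n : ℝ) - 2)) ≤
        M / (1 + ‖x‖) ^ (a - 1) := by
    intro i
    refine integral_le_of_le_inv_one_add_norm_pow_mul_pow volume ha hE (by positivity)
      (by positivity) _ (hnonneg i) (B := fun y => ‖x - ext y‖) (fun y => ?_)
      (fun y => norm_sub_le_norm_sub_euclideanExtend (Nat.sub_le n 1) x y) (fun y => ?_)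
    · rw [hn2, Real.rpow_natCast, one_div, mul_inv, ← mul_assoc]
      refine mul_le_mul_of_nonneg_right ?_ (by positivity)
      rw [show (n : ℝ) = ((a + 2 : ℕ) : ℝ) by rw [hna]]
      exact sq_div_one_add_sq_rpow_le (PiLp.norm_apply_le y i)
    · have h1 := norm_euclideanExtend_le (Nat.sub_le n 1) y
      have h2 := norm_le_norm_sub_add x (ext y)
      rw [hext] at h2 ⊢
      linarith
  clear_value M
  rw [hn3, Real.rpow_natCast, abs_mul]
  calc _ ≤ |αn / ω| * ∑ i, |k i| * (M / (1 + ‖x‖) ^ (a - 1)) := by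
        gcongr
        refine (Finset.abs_sum_le_sum_abs _ _).trans (Finset.sum_le_sum fun i _ => ?_)
        rw [abs_mul, abs_of_nonneg (integral_nonneg (hnonneg i))]
        exact mul_le_mul_of_nonneg_left (hbound i) (abs_nonneg _)
    _ = (|αn / ω| * ∑ i, |k i| * M) / (1 + ‖x‖) ^ (a - 1) := by
        rw [mul_div_assoc, Finset.sum_div]
        simp_rw [mul_div_assoc]
    _ ≤ _ := by gcongr; linarith
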